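/- arXiv:2502.20666 — 2 statements merged into one kernel-verified Lean document; each statement's English description precedes it below -/
import Mathlib

section
/- (Generalized Grobman–Hartman Theorem) Let X be a complex Banach space, F : X → X a C¹ diffeomorphism, and p a fixed point of F such that the derivative DF_p : X → X is a generalized hyperbolic invertible bounded linear operator. Then there are a homeomorphism H : X → X and a neighborhood U of p in X such that H ∘ F = DF_p ∘ H on U. -/
open Filter Topology

variable {X : Type*} [NormedAddCommGroup X] [NormedSpace ℂ X] [CompleteSpace X]

/-- An invertible bounded linear operator is generalized hyperbolic. -/
def GeneralizedHyperbolic (T : X ≃L[ℂ] X) : Prop :=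
  ∃ S U : Submodule ℂ X,
    IsClosed (S : Set X) ∧ IsClosed (U : Set X) ∧ IsCompl S U ∧
    (∀ x ∈ S, T x ∈ S) ∧ (∀ x ∈ U, T.symm x ∈ U) ∧
    ∃ c > (0 : ℝ), ∃ t : ℝ, 0 < t ∧ t < 1 ∧
      (∀ x ∈ S, ∀ n : ℕ, ‖(T ^ n) x‖ ≤ c * t ^ n * ‖x‖) ∧
      (∀ x ∈ U, ∀ n : ℕ, ‖(T.symm ^ n) x‖ ≤ c * t ^ n * ‖x‖)


/-- The explicit solution operator of the linear cohomological equation. -/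
noncomputable def ghL (A B : ℕ → X →L[ℂ] X) (E : X ≃ₜ X) (φ : X → X) (x : X) : X :=
  ∑' n : ℕ, (B n (φ (E^[n] x)) - A n (φ (E.symm^[n + 1] x)))

lemma ghL_term_le {A B : ℕ → X →L[ℂ] X} {a : ℕ → ℝ} (hab : ∀ n, ‖A n‖ + ‖B n‖ ≤ a n)
    {φ : X → X} {M : ℝ} (hM : ∀ x, ‖φ x‖ ≤ M) (n : ℕ) (y z : X) :
    ‖B n (φ y) - A n (φ z)‖ ≤ a n * M := by
  have hM0 : 0 ≤ M := (norm_nonneg _).trans (hM y)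
  calc ‖B n (φ y) - A n (φ z)‖ ≤ ‖B n (φ y)‖ + ‖A n (φ z)‖ := norm_sub_le _ _
    _ ≤ ‖B n‖ * M + ‖A n‖ * M :=
        add_le_add ((B n).le_opNorm_of_le (hM y)) ((A n).le_opNorm_of_le (hM z))
    _ = (‖A n‖ + ‖B n‖) * M := by ring
    _ ≤ a n * M := mul_le_mul_of_nonneg_right (hab n) hM0

lemma ghL_summable {A B : ℕ → X →L[ℂ] X} {a : ℕ → ℝ} (hab : ∀ n, ‖A n‖ + ‖B n‖ ≤ a n)
    {C : ℝ} (ha : HasSum a C) (E : X ≃ₜ X)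
    {φ : X → X} {M : ℝ} (hM : ∀ x, ‖φ x‖ ≤ M) (x : X) :
    Summable fun n : ℕ => (B n (φ (E^[n] x)) - A n (φ (E.symm^[n + 1] x))) :=
  Summable.of_norm_bounded (ha.mul_right M).summable fun n => ghL_term_le hab hM n _ _

lemma ghL_norm_le {A B : ℕ → X →L[ℂ] X} {a : ℕ → ℝ} (hab : ∀ n, ‖A n‖ + ‖B n‖ ≤ a n)
    {C : ℝ} (ha : HasSum a C) (E : X ≃ₜ X)
    {φ : X → X} {M : ℝ} (hM : ∀ x, ‖φ x‖ ≤ M) (x : X) :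
    ‖ghL A B E φ x‖ ≤ C * M :=
  tsum_of_norm_bounded (ha.mul_right M) fun n => ghL_term_le hab hM n _ _

lemma ghL_continuous {A B : ℕ → X →L[ℂ] X} {a : ℕ → ℝ} (hab : ∀ n, ‖A n‖ + ‖B n‖ ≤ a n)
    {C : ℝ} (ha : HasSum a C) (E : X ≃ₜ X)
    {φ : X → X} {M : ℝ} (hM : ∀ x, ‖φ x‖ ≤ M) (hφ : Continuous φ) :
    Continuous (ghL A B E φ) := by
  refine continuous_tsum (fun n => ?_) (ha.mul_right M).summable
    (fun n x => ghL_term_le hab hM n _ _)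
  have h1 : Continuous (E^[n]) := E.continuous.iterate n
  have h2 : Continuous (E.symm^[n + 1]) := E.symm.continuous.iterate (n + 1)
  exact ((B n).continuous.comp (hφ.comp h1)).sub ((A n).continuous.comp (hφ.comp h2))

lemma ghL_sub {A B : ℕ → X →L[ℂ] X} {a : ℕ → ℝ} (hab : ∀ n, ‖A n‖ + ‖B n‖ ≤ a n)
    {C : ℝ} (ha : HasSum a C) (E : X ≃ₜ X)
    {φ ψ : X → X} {M M' : ℝ} (hM : ∀ x, ‖φ x‖ ≤ M) (hM' : ∀ x, ‖ψ x‖ ≤ M') (x : X) :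
    ghL A B E (fun y => φ y - ψ y) x = ghL A B E φ x - ghL A B E ψ x := by
  unfold ghL
  rw [← (ghL_summable hab ha E hM x).tsum_sub (ghL_summable hab ha E hM' x)]
  congr 1
  funext n
  simp only [map_sub]
  abel

lemma ghL_comp (A B : ℕ → X →L[ℂ] X) (E E' : X ≃ₜ X) (H : X → X)
    (hH : ∀ x, H (E x) = E' (H x)) (φ : X → X) (x : X) :
    ghL A B E' φ (H x) = ghL A B E (fun y => φ (H y)) x := by
  have h1 : Function.Semiconj H E E' := hH
  have h2 : Function.Semiconj H E.symm E'.symm := fun y => by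
    rw [Homeomorph.eq_symm_apply, ← hH, E.apply_symm_apply]
  unfold ghL
  congr 1
  funext n
  rw [← (h1.iterate_right n) x, ← (h2.iterate_right (n+1)) x]

lemma ghL_eq {A B : ℕ → X →L[ℂ] X} {a : ℕ → ℝ} (hab : ∀ n, ‖A n‖ + ‖B n‖ ≤ a n)
    {C : ℝ} (ha : HasSum a C) (D : X ≃L[ℂ] X)
    (hA : ∀ n v, D (A n v) = A (n + 1) v) (hB : ∀ n v, D (B (n + 1) v) = B n v)
    (h0 : ∀ v, D (B 0 v) + A 0 v = v) (E : X ≃ₜ X)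
    {φ : X → X} {M : ℝ} (hM : ∀ x, ‖φ x‖ ≤ M) (x : X) :
    D (ghL A B E φ x) - ghL A B E φ (E x) = φ x := by
  have hsA : ∀ y : ℕ → X, Summable fun n => A n (φ (y n)) := fun y =>
    Summable.of_norm_bounded (ha.mul_right M).summable fun n =>
      ((A n).le_opNorm_of_le (hM _)).trans (mul_le_mul_of_nonneg_right
        ((le_add_of_nonneg_right (norm_nonneg _)).trans (hab n)) ((norm_nonneg _).trans (hM x)))
  have hsB : ∀ y : ℕ → X, Summable fun n => B n (φ (y n)) := fun y =>
    Summable.of_norm_bounded (ha.mul_right M).summable fun n =>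
      ((B n).le_opNorm_of_le (hM _)).trans (mul_le_mul_of_nonneg_right
        ((le_add_of_nonneg_left (norm_nonneg _)).trans (hab n)) ((norm_nonneg _).trans (hM x)))
  have e1 : D (ghL A B E φ x) = D (B 0 (φ x)) + (∑' n, B n (φ (E^[n+1] x)))
      - ∑' n, A (n+1) (φ (E.symm^[n+1] x)) := by
    unfold ghL
    rw [(hsB _).tsum_sub (hsA _), map_sub, (hsB fun n => E^[n] x).tsum_eq_zero_add, map_add,
      D.map_tsum, D.map_tsum]
    simp only [hA, hB, Function.iterate_zero, id]
  have e2 : ghL A B E φ (E x) = (∑' n, B n (φ (E^[n+1] x)))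
      - (A 0 (φ x) + ∑' n, A (n+1) (φ (E.symm^[n+1] x))) := by
    have : ∑' n, A n (φ (E.symm^[n] x))
        = A 0 (φ x) + ∑' n, A (n+1) (φ (E.symm^[n+1] x)) :=
      (hsA fun n => E.symm^[n] x).tsum_eq_zero_add
    rw [← this]
    unfold ghL
    rw [(hsB _).tsum_sub (hsA _)]
    simp only [Function.iterate_succ_apply, E.symm_apply_apply]
  rw [e1, e2]
  refine Eq.trans ?_ (h0 (φ x))
  abel

lemma gh_zero_of_contract {m : X → X} {q : ℝ} (hq : q < 1) {M₀ : ℝ} (hb : ∀ x, ‖m x‖ ≤ M₀)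
    (hm : ∀ M, (∀ x, ‖m x‖ ≤ M) → ∀ x, ‖m x‖ ≤ q * M) (x : X) : m x = 0 := by
  have hbdd : BddAbove (Set.range fun x => ‖m x‖) := ⟨M₀, by rintro _ ⟨y, rfl⟩; exact hb y⟩
  have h1 : ∀ x, ‖m x‖ ≤ ⨆ x, ‖m x‖ := fun x => le_ciSup hbdd x
  have h2 : (⨆ x, ‖m x‖) ≤ q * ⨆ x, ‖m x‖ := ciSup_le (hm _ h1)
  have h3 := h1 x
  have h4 := norm_nonneg (m x)
  have : ‖m x‖ ≤ 0 := by nlinarith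
  exact norm_le_zero_iff.1 this

/-- Global conjugacy for small Lipschitz bounded perturbations. -/
lemma gh_core {A B : ℕ → X →L[ℂ] X} {a : ℕ → ℝ} (hab : ∀ n, ‖A n‖ + ‖B n‖ ≤ a n)
    {C : ℝ} (ha : HasSum a C) (D : X ≃L[ℂ] X)
    (hA : ∀ n v, D (A n v) = A (n + 1) v) (hB : ∀ n v, D (B (n + 1) v) = B n v)
    (h0 : ∀ v, D (B 0 v) + A 0 v = v) (E : X ≃ₜ X) {f : X → X} {M : ℝ}
    (hM : ∀ x, ‖f x‖ ≤ M) {K : ℝ} (hK0 : 0 ≤ K) (hK : ∀ x y, ‖f x - f y‖ ≤ K * ‖x - y‖)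
    (hCK : C * K < 1) (hE : ∀ x, E x = D x + f x) :
    ∃ H : X ≃ₜ X, ∀ x, H (E x) = D (H x) := by
  have hC0 : 0 ≤ C := ha.nonneg fun n =>
    (add_nonneg (norm_nonneg _) (norm_nonneg _)).trans (hab n)
  have hfc : Continuous f := (LipschitzWith.of_dist_le_mul (K := ⟨K, hK0⟩) fun x y => by
    rw [dist_eq_norm, dist_eq_norm]; exact hK x y).continuous
  let D' : X ≃ₜ X := D.toHomeomorph
  have hD' : ∀ x, D' x = D x := fun _ => rfl
  let h : X → X := ghL A B E f
  have hhc : Continuous h := ghL_continuous hab ha E hM hfc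
  -- the fixed point
  let Φ : BoundedContinuousFunction X X → BoundedContinuousFunction X X := fun k =>
    BoundedContinuousFunction.ofNormedAddCommGroup (ghL A B D' fun x => - f (x + k x))
      (ghL_continuous hab ha D' (M := M) (fun x => by rw [norm_neg]; exact hM _)
        (hfc.comp (continuous_id.add k.continuous)).neg) (C * M)
      (ghL_norm_le hab ha D' (M := M) (fun x => by rw [norm_neg]; exact hM _))
  have hΦ : ContractingWith ⟨C * K, mul_nonneg hC0 hK0⟩ Φ := by
    refine ⟨by exact_mod_cast hCK, LipschitzWith.of_dist_le_mul fun k l => ?_⟩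
    refine (BoundedContinuousFunction.dist_le
      (mul_nonneg (NNReal.coe_nonneg _) dist_nonneg)).2 fun x => ?_
    change dist (ghL A B D' (fun x => - f (x + k x)) x) (ghL A B D' (fun x => - f (x + l x)) x)
      ≤ C * K * dist k l
    rw [dist_eq_norm, ← ghL_sub hab ha D' (M := M) (M' := M)
      (fun x => by rw [norm_neg]; exact hM _) (fun x => by rw [norm_neg]; exact hM _), mul_assoc]
    refine ghL_norm_le hab ha D' (fun y => ?_) x
    have e : -f (y + k y) - -f (y + l y) = f (y + l y) - f (y + k y) := by abel
    rw [e]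
    refine (hK _ _).trans (mul_le_mul_of_nonneg_left ?_ hK0)
    have e2 : y + l y - (y + k y) = l y - k y := by abel
    rw [e2, ← dist_eq_norm, dist_comm]
    exact BoundedContinuousFunction.dist_coe_le_dist y
  obtain ⟨k, hk, -⟩ := hΦ.exists_fixedPoint 0 (edist_ne_top _ _)
  have hkx : ∀ x, k x = ghL A B D' (fun x => - f (x + k x)) x := fun x => by
    conv_lhs => rw [← hk]
    rfl
  have hMk : ∀ x, ‖-f (x + k x)‖ ≤ M := fun x => by rw [norm_neg]; exact hM _
  let H : X → X := fun x => x + h x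
  let J : X → X := fun x => x + k x
  have hHE : ∀ x, H (E x) = D' (H x) := fun x => by
    have := ghL_eq hab ha D hA hB h0 E hM x
    change E x + ghL A B E f (E x) = D (x + ghL A B E f x)
    rw [map_add, hE x, add_assoc]
    rw [hE x] at this
    congr 1
    nth_rewrite 1 [← this]
    abel
  have hJE : ∀ x, J (D' x) = E (J x) := fun x => by
    have := ghL_eq hab ha D hA hB h0 D' hMk x
    rw [← hkx, ← hkx] at this
    change D x + k (D' x) = E (x + k x)
    rw [hE, map_add, add_assoc]
    congr 1
    rw [← neg_neg (f (x + k x)), ← this]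
    abel
  have hHJ : ∀ x, H (J x) = x := fun x => by
    have e1 : h (J x) = ghL A B D' (fun y => f (J y)) x := ghL_comp A B D' E J hJE f x
    have e2 : k x = - ghL A B D' (fun y => f (J y)) x := by
      rw [hkx x]
      unfold ghL
      rw [← tsum_neg]
      congr 1
      funext n
      simp only [map_neg, J]
      abel
    change x + k x + h (J x) = x
    rw [e1, e2]
    abel
  have hJH : ∀ x, J (H x) = x := fun x => by
    let m : X → X := fun x => h x + k (H x)
    have em : ∀ x, J (H x) = x + m x := fun x => by
      change x + h x + k (H x) = x + (h x + k (H x))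
      abel
    have hm : ∀ x, m x = ghL A B E (fun y => f y - f (J (H y))) x := fun x => by
      rw [ghL_sub hab ha E hM (M' := M) (fun y => hM _)]
      change h x + k (H x) = h x - _
      rw [hkx, ghL_comp A B E D' H hHE, sub_eq_add_neg]
      congr 1
      unfold ghL
      rw [← tsum_neg]
      congr 1
      funext n
      simp only [map_neg, J]
      abel
    have hb : ∀ x, ‖f x - f (J (H x))‖ ≤ M + M := fun x =>
      (norm_sub_le _ _).trans (add_le_add (hM _) (hM _))
    have : m x = 0 := by
      refine gh_zero_of_contract hCK (M₀ := C * (M + M))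
        (fun x => by rw [hm]; exact ghL_norm_le hab ha E hb x) (fun N hN x => ?_) x
      rw [hm, mul_assoc]
      refine ghL_norm_le hab ha E (fun y => ?_) x
      refine (hK _ _).trans (mul_le_mul_of_nonneg_left ?_ hK0)
      rw [em, sub_add_cancel_left, norm_neg]
      exact hN y
    rw [em, this, add_zero]
  exact ⟨{ toFun := H, invFun := J, left_inv := hJH, right_inv := hHJ,
           continuous_toFun := continuous_id.add hhc,
           continuous_invFun := continuous_id.add k.continuous }, hHE⟩

/-- Lipschitz radial retraction onto the ball of radius `r`. -/
noncomputable def ghR (r : ℝ) (y : X) : X := ((r / max r ‖y‖ : ℝ) : ℂ) • y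

lemma ghR_norm {r : ℝ} (hr : 0 < r) (y : X) : ‖ghR r y‖ ≤ r := by
  have ha : 0 < max r ‖y‖ := lt_max_of_lt_left hr
  unfold ghR
  rw [norm_smul, Complex.norm_real, Real.norm_of_nonneg (by positivity), div_mul_eq_mul_div,
    div_le_iff₀ ha]
  exact mul_le_mul_of_nonneg_left (le_max_right _ _) hr.le

lemma ghR_of_le {r : ℝ} (hr : 0 < r) {y : X} (hy : ‖y‖ ≤ r) : ghR r y = y := by
  unfold ghR
  rw [max_eq_left hy, div_self hr.ne', Complex.ofReal_one, one_smul]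

lemma ghR_lip {r : ℝ} (hr : 0 < r) (x y : X) : ‖ghR r x - ghR r y‖ ≤ 2 * ‖x - y‖ := by
  unfold ghR
  set a := max r ‖x‖ with ha_def
  set b := max r ‖y‖ with hb_def
  have ha : 0 < a := lt_max_of_lt_left hr
  have hb : 0 < b := lt_max_of_lt_left hr
  have hra : r ≤ a := le_max_left _ _
  have hyb : ‖y‖ ≤ b := le_max_right _ _
  have hab : |b - a| ≤ ‖x - y‖ := by
    have h1 : |b - a| ≤ |‖y‖ - ‖x‖| := by
      have := abs_max_sub_max_le_max r ‖y‖ r ‖x‖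
      simpa using this
    refine h1.trans ?_
    rw [norm_sub_rev]
    exact abs_norm_sub_norm_le y x
  have e : ((r / a : ℝ) : ℂ) • x - ((r / b : ℝ) : ℂ) • y
      = ((r / a : ℝ) : ℂ) • (x - y) + ((r / a - r / b : ℝ) : ℂ) • y := by
    rw [Complex.ofReal_sub, sub_smul, smul_sub]
    abel
  rw [e]
  refine (norm_add_le _ _).trans ?_
  rw [norm_smul, norm_smul, Complex.norm_real, Complex.norm_real, Real.norm_eq_abs,
    Real.norm_eq_abs, abs_of_pos (div_pos hr ha)]
  have h1 : r / a * ‖x - y‖ ≤ 1 * ‖x - y‖ :=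
    mul_le_mul_of_nonneg_right ((div_le_one ha).2 hra) (norm_nonneg _)
  have h2 : |r / a - r / b| * ‖y‖ ≤ |b - a| := by
    have e3 : r / a - r / b = (r / a) * ((b - a) / b) := by field_simp
    rw [e3, abs_mul, abs_of_pos (div_pos hr ha), abs_div, abs_of_pos hb]
    calc r / a * (|b - a| / b) * ‖y‖ ≤ 1 * (|b - a| / b) * b := by
          gcongr
          exact (div_le_one ha).2 hra
      _ = |b - a| := by field_simp
  linarith

/-- Generalized Grobman–Hartman theorem. -/
theorem generalized_grobman_hartman (F G : X → X)
    (hGF : Function.LeftInverse G F) (hFG : Function.RightInverse G F)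
    (hF : ContDiff ℂ 1 F) (hG : ContDiff ℂ 1 G)
    (p : X) (hp : F p = p) (D : X ≃L[ℂ] X)
    (hD : HasFDerivAt F (D : X →L[ℂ] X) p)
    (hgh : GeneralizedHyperbolic D) :
    ∃ H : X ≃ₜ X, ∃ U ∈ 𝓝 p, ∀ x ∈ U, H (F x) = D (H x) := by
  obtain ⟨S, U, hS, hU, hSU, hDS, hDU, c, hc, t, ht0, ht1, hcS, hcU⟩ := hgh
  have htop := Submodule.IsCompl.isTopCompl_of_isClosed hSU hS hU
  obtain ⟨P, hPS, hPU⟩ : ∃ P : X →L[ℂ] X, (∀ x, P x ∈ S) ∧ ∀ x, x - P x ∈ U := by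
    refine ⟨S.projectionL U htop, fun x => ?_, fun x => ?_⟩
    · exact Submodule.projectionL_apply_mem htop x
    · rw [← Submodule.projectionL_eq_self_sub_projectionL]
      exact Submodule.projectionL_apply_mem _ x
  let Q : X →L[ℂ] X := ContinuousLinearMap.id ℂ X - P
  have hQ : ∀ x, Q x = x - P x := fun x => rfl
  let A : ℕ → X →L[ℂ] X := fun n => ((D ^ n : X ≃L[ℂ] X) : X →L[ℂ] X) ∘L P
  let B : ℕ → X →L[ℂ] X := fun n => ((D.symm ^ (n + 1) : X ≃L[ℂ] X) : X →L[ℂ] X) ∘L Q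
  let a : ℕ → ℝ := fun n => t ^ n * (c * ‖P‖ + c * ‖Q‖)
  have hab : ∀ n, ‖A n‖ + ‖B n‖ ≤ a n := fun n => by
    have h1 : ‖A n‖ ≤ c * t ^ n * ‖P‖ := by
      refine ContinuousLinearMap.opNorm_le_bound _ (by positivity) fun x => ?_
      refine (hcS _ (hPS x) n).trans ?_
      rw [mul_assoc _ ‖P‖]
      exact mul_le_mul_of_nonneg_left (P.le_opNorm x) (by positivity)
    have h2 : ‖B n‖ ≤ c * t ^ n * ‖Q‖ := by
      refine ContinuousLinearMap.opNorm_le_bound _ (by positivity) fun x => ?_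
      refine (hcU _ (hPU x) (n + 1)).trans ?_
      rw [mul_assoc _ ‖Q‖]
      refine mul_le_mul ?_ (Q.le_opNorm x) (norm_nonneg _) (by positivity)
      exact mul_le_mul_of_nonneg_left
        (pow_le_pow_of_le_one ht0.le ht1.le (Nat.le_succ n)) hc.le
    have h3 : a n = c * t ^ n * ‖P‖ + c * t ^ n * ‖Q‖ := by simp only [a]; ring
    linarith
  have ha : HasSum a ((1 - t)⁻¹ * (c * ‖P‖ + c * ‖Q‖)) :=
    (hasSum_geometric_of_lt_one ht0.le ht1).mul_right _
  set C := (1 - t)⁻¹ * (c * ‖P‖ + c * ‖Q‖) with hC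
  have hC0 : 0 ≤ C := by
    have : 0 ≤ 1 - t := by linarith
    positivity
  have hA : ∀ n v, D (A n v) = A (n + 1) v := fun n v => by
    change D ((D ^ n) (P v)) = (D ^ (n + 1)) (P v)
    rw [pow_succ']
    rfl
  have hB : ∀ n v, D (B (n + 1) v) = B n v := fun n v => by
    change D ((D.symm ^ (n + 2)) (Q v)) = (D.symm ^ (n + 1)) (Q v)
    rw [pow_succ' _ (n + 1)]
    exact D.apply_symm_apply _
  have h0 : ∀ v, D (B 0 v) + A 0 v = v := fun v => by
    change D ((D.symm ^ (0 + 1)) (Q v)) + (D ^ 0) (P v) = v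
    rw [zero_add, pow_one, pow_zero, D.apply_symm_apply, hQ]
    exact sub_add_cancel _ _
  -- choice of the Lipschitz constant
  let N : NNReal := ‖(D.symm : X →L[ℂ] X)‖₊
  obtain ⟨κ, hκ0, hκC, hκN⟩ : ∃ κ : ℝ, 0 < κ ∧ C * (2 * κ) < 1 ∧ (N : ℝ) * (2 * κ) < 1 := by
    refine ⟨1 / (2 * (C + N + 1)), by positivity, ?_, ?_⟩
    · have hN : (0 : ℝ) ≤ N := N.2
      rw [show C * (2 * (1 / (2 * (C + N + 1)))) = C / (C + N + 1) by field_simp,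
        div_lt_one (by positivity)]
      linarith
    · have hN : (0 : ℝ) ≤ N := N.2
      rw [show (N : ℝ) * (2 * (1 / (2 * (C + N + 1)))) = N / (C + N + 1) by field_simp,
        div_lt_one (by positivity)]
      linarith
  have hstrict : HasStrictFDerivAt F (D : X →L[ℂ] X) p :=
    hF.contDiffAt.hasStrictFDerivAt' hD one_ne_zero
  obtain ⟨s, hs, hFs⟩ := hstrict.approximates_deriv_on_nhds (c := ⟨κ, hκ0.le⟩) (Or.inr hκ0)
  obtain ⟨r, hr, hrs⟩ := Metric.nhds_basis_closedBall.mem_iff.1 hs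
  let f : X → X := fun y => F (p + ghR r y) - p - D (ghR r y)
  have hmem : ∀ y, p + ghR r y ∈ s := fun y => hrs (by
    rw [Metric.mem_closedBall, dist_eq_norm, add_sub_cancel_left]
    exact ghR_norm hr y)
  have hflip : ∀ x y, ‖f x - f y‖ ≤ 2 * κ * ‖x - y‖ := fun x y => by
    have h1 := hFs _ (hmem x) _ (hmem y)
    have e : f x - f y = F (p + ghR r x) - F (p + ghR r y)
        - (D : X →L[ℂ] X) (p + ghR r x - (p + ghR r y)) := by
      rw [add_sub_add_left_eq_sub, map_sub]
      simp only [f, ContinuousLinearEquiv.coe_coe]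
      abel
    rw [e]
    refine h1.trans ?_
    rw [add_sub_add_left_eq_sub]
    change κ * _ ≤ _
    have := mul_le_mul_of_nonneg_left (ghR_lip hr x y) hκ0.le
    linarith
  have hf0 : f 0 = 0 := by
    have : ghR r (0 : X) = 0 := by simp [ghR]
    simp [f, this, hp]
  have hfb : ∀ x, ‖f x‖ ≤ κ * r := fun x => by
    have h1 := hFs _ (hmem x) _ (mem_of_mem_nhds hs)
    have e : f x = F (p + ghR r x) - F p - (D : X →L[ℂ] X) (p + ghR r x - p) := by
      rw [add_sub_cancel_left, hp]
      rfl
    rw [e]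
    refine h1.trans ?_
    rw [add_sub_cancel_left]
    exact mul_le_mul_of_nonneg_left (ghR_norm hr x) hκ0.le
  have happ : ApproximatesLinearOn (fun x => D x + f x) (D : X →L[ℂ] X) Set.univ
      ⟨2 * κ, by positivity⟩ := fun x _ y _ => by
    have e : D x + f x - (D y + f y) - (D : X →L[ℂ] X) (x - y) = f x - f y := by
      rw [map_sub]
      simp only [ContinuousLinearEquiv.coe_coe]
      abel
    rw [e]
    exact hflip x y
  have hcN : Subsingleton X ∨ (⟨2 * κ, by positivity⟩ : NNReal) < N⁻¹ := by
    refine D.subsingleton_or_nnnorm_symm_pos.imp id fun hN => ?_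
    change 2 * κ < ((N⁻¹ : NNReal) : ℝ)
    rw [NNReal.coe_inv, lt_inv_comm₀ (by positivity) (by exact_mod_cast hN),
      ← one_div, lt_div_iff₀ (by positivity)]
    exact hκN
  let E : X ≃ₜ X := ApproximatesLinearOn.toHomeomorph _ happ hcN
  have hE : ∀ x, E x = D x + f x := fun x => rfl
  obtain ⟨H, hH⟩ := gh_core hab ha D hA hB h0 E hfb (K := 2 * κ) (by positivity) hflip hκC hE
  refine ⟨(Homeomorph.subRight p).trans H, Metric.closedBall p r,
    Metric.closedBall_mem_nhds p hr, fun x hx => ?_⟩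
  rw [Metric.mem_closedBall, dist_eq_norm] at hx
  change H (F x - p) = D (H (x - p))
  rw [← hH, hE]
  simp only [f, ghR_of_le hr hx, add_sub_cancel]
end

section
/- Let X be a finite-dimensional complex Banach space and L : X → X an invertible linear operator. The following are equivalent: (1) L is hyperbolic; (2) L is expansive; (3) L has the shadowing property. -/
open Filter Topology

variable {X : Type*} [NormedAddCommGroup X] [NormedSpace ℂ X] [CompleteSpace X]

/-- `L` has the shadowing property. -/
def ShadowingProperty (L : X ≃L[ℂ] X) : Prop :=
  ∀ ε > (0 : ℝ), ∃ δ > (0 : ℝ), ∀ x : ℤ → X,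
    (∀ n : ℤ, ‖L (x n) - x (n + 1)‖ ≤ δ) →
    ∃ p : X, ∀ n : ℤ, ‖(L ^ n) p - x n‖ ≤ ε

/-- `L` is expansive. -/
def Expansive (L : X ≃L[ℂ] X) : Prop :=
  ∃ ε > (0 : ℝ), ∀ x : X, (∀ n : ℤ, ‖(L ^ n) x‖ ≤ ε) → x = 0

/-- `L` is hyperbolic: its spectrum misses the unit circle. -/
def Hyperbolic (L : X ≃L[ℂ] X) : Prop :=
  ∀ z ∈ spectrum ℂ (L : X →L[ℂ] X), ‖z‖ ≠ 1

open BoundedContinuousFunction in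
/-- The bounded shift. -/
noncomputable def shiftOp (X : Type*) [NormedAddCommGroup X] [NormedSpace ℂ X] (k : ℤ) :
    (ℤ →ᵇ X) →L[ℂ] (ℤ →ᵇ X) :=
  LinearMap.mkContinuous
    { toFun := fun f => f.compContinuous ⟨fun n => n + k, continuous_of_discreteTopology⟩
      map_add' := fun f g => by ext n; simp
      map_smul' := fun c f => by ext n; simp } 1 (by
    intro f
    rw [one_mul]
    refine (BoundedContinuousFunction.norm_le (norm_nonneg f)).2 fun n => ?_
    exact f.norm_coe_le_norm _)

open BoundedContinuousFunction in
/-- Pointwise application, as an algebra homomorphism. -/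
noncomputable def pointwiseHom (X : Type*) [NormedAddCommGroup X] [NormedSpace ℂ X] :
    (X →L[ℂ] X) →ₐ[ℂ] ((ℤ →ᵇ X) →L[ℂ] (ℤ →ᵇ X)) :=
  AlgHom.ofLinearMap
    { toFun := fun T => T.compLeftContinuousBounded ℤ
      map_add' := fun f g => by ext h n; simp
      map_smul' := fun c f => by ext h n; simp }
    (by ext h n; simp) (fun f g => by ext h n; simp)

open BoundedContinuousFunction

theorem shiftOp_apply {X : Type*} [NormedAddCommGroup X] [NormedSpace ℂ X] (k : ℤ)
    (f : ℤ →ᵇ X) (n : ℤ) : shiftOp X k f n = f (n + k) := rfl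

theorem pointwiseHom_apply {X : Type*} [NormedAddCommGroup X] [NormedSpace ℂ X] (T : X →L[ℂ] X)
    (f : ℤ →ᵇ X) (n : ℤ) : pointwiseHom X T f n = T (f n) := rfl

theorem shiftOp_norm_le (X : Type*) [NormedAddCommGroup X] [NormedSpace ℂ X] (k : ℤ) :
    ‖shiftOp X k‖ ≤ 1 := LinearMap.mkContinuous_norm_le _ zero_le_one _

theorem shiftOp_mul (X : Type*) [NormedAddCommGroup X] [NormedSpace ℂ X] (k l : ℤ)
    (h : k + l = 0) : shiftOp X k * shiftOp X l = 1 := by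
  ext f n
  simp [shiftOp_apply, add_assoc, h]

theorem norm_of_mem_spectrum_shift {X : Type*} [NormedAddCommGroup X] [NormedSpace ℂ X]
    [CompleteSpace X] (z : ℂ) (hz : z ∈ spectrum ℂ (shiftOp X 1)) : ‖z‖ = 1 := by
  by_contra hne
  rw [spectrum.mem_iff] at hz
  apply hz
  rcases lt_or_gt_of_ne hne with h | h
  · have h1 : IsUnit (1 - z • shiftOp X (-1)) := by
      apply isUnit_one_sub_of_norm_lt_one
      rw [norm_smul]
      have := shiftOp_norm_le X (-1)
      nlinarith [norm_nonneg z]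
    have h2 : IsUnit (shiftOp X 1) :=
      ⟨⟨shiftOp X 1, shiftOp X (-1), shiftOp_mul X _ _ (by norm_num),
        shiftOp_mul X _ _ (by norm_num)⟩, rfl⟩
    have h3 := (h2.mul h1).neg
    convert h3 using 1
    rw [mul_sub, mul_smul_comm, shiftOp_mul X _ _ (by norm_num), Algebra.algebraMap_eq_smul_one]
    simp
  · have hz0 : z ≠ 0 := by
      rintro rfl
      simp at h
      linarith
    have h1 : IsUnit (1 - z⁻¹ • shiftOp X 1) := by
      apply isUnit_one_sub_of_norm_lt_one
      rw [norm_smul, norm_inv]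
      have := shiftOp_norm_le X 1
      have h4 : ‖z‖⁻¹ < 1 := inv_lt_one_of_one_lt₀ h
      have h5 : 0 ≤ ‖z‖⁻¹ := by positivity
      nlinarith
    have h2 : IsUnit (algebraMap ℂ ((ℤ →ᵇ X) →L[ℂ] (ℤ →ᵇ X)) z) := (IsUnit.mk0 z hz0).map _
    convert h2.mul h1 using 1
    rw [mul_sub, mul_smul_comm, Algebra.algebraMap_eq_smul_one]
    simp [smul_smul, hz0]

theorem sub_dvd_aeval {A : Type*} [Ring A] [Algebra ℂ A] (S T : A) (h : Commute S T)
    (p : Polynomial ℂ) : ∃ q : A, Commute S q ∧ Commute T q ∧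
      Polynomial.aeval S p - Polynomial.aeval T p = (S - T) * q := by
  induction p using Polynomial.induction_on' with
  | add p q hp hq =>
    obtain ⟨a, h1, h2, h3⟩ := hp
    obtain ⟨b, h4, h5, h6⟩ := hq
    refine ⟨a + b, h1.add_right h4, h2.add_right h5, ?_⟩
    rw [mul_add, ← h3, ← h6, map_add, map_add]; abel
  | monomial n c =>
    have : ∃ q : A, Commute S q ∧ Commute T q ∧ S ^ n - T ^ n = (S - T) * q := by
      induction n with
      | zero => exact ⟨0, by simp, by simp, by simp⟩
      | succ n ih =>
        obtain ⟨q, h1, h2, h3⟩ := ih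
        refine ⟨S ^ n + T * q, ((Commute.refl S).pow_right n).add_right (h.mul_right h1),
          (h.symm.pow_right n).add_right ((Commute.refl T).mul_right h2), ?_⟩
        have h4 : (S - T) * T = T * (S - T) := by rw [sub_mul, mul_sub, h.eq]
        rw [mul_add, ← mul_assoc, h4, mul_assoc, ← h3, pow_succ', pow_succ']
        noncomm_ring
    obtain ⟨q, h1, h2, h3⟩ := this
    refine ⟨c • q, h1.smul_right c, h2.smul_right c, ?_⟩
    rw [Polynomial.aeval_monomial, Polynomial.aeval_monomial, ← mul_sub, h3, mul_smul_comm,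
      Algebra.algebraMap_eq_smul_one, smul_mul_assoc, one_mul]

theorem isUnit_shift_sub {X : Type*} [NormedAddCommGroup X] [NormedSpace ℂ X]
    [CompleteSpace X] [FiniteDimensional ℂ X] (L : X ≃L[ℂ] X) (hL : Hyperbolic L) :
    IsUnit (shiftOp X 1 - pointwiseHom X (L : X →L[ℂ] X)) := by
  set T : X →L[ℂ] X := (L : X →L[ℂ] X) with hT
  rcases subsingleton_or_nontrivial X with hX | hX
  · have : Subsingleton ((ℤ →ᵇ X) →L[ℂ] (ℤ →ᵇ X)) :=
      ⟨fun a b => by ext f n; exact Subsingleton.elim _ _⟩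
    exact isUnit_of_subsingleton _
  have : FiniteDimensional ℂ (X →L[ℂ] X) :=
    LinearEquiv.finiteDimensional (LinearMap.toContinuousLinearMap (𝕜 := ℂ) (E := X) (F' := X))
  have hint : IsIntegral ℂ T := Algebra.IsIntegral.isIntegral T
  set p := minpoly ℂ T
  have hp : Polynomial.aeval T p = 0 := minpoly.aeval _ _
  have hcomm : Commute (shiftOp X 1) (pointwiseHom X T) := by
    ext f n; rfl
  obtain ⟨q, h1, h2, h3⟩ := sub_dvd_aeval _ _ hcomm p
  have h4 : Polynomial.aeval (pointwiseHom X T) p = 0 := by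
    rw [Polynomial.aeval_algHom_apply, hp, map_zero]
  rw [h4, sub_zero] at h3
  have h5 : IsUnit (Polynomial.aeval (shiftOp X 1) p) := by
    apply spectrum.isUnit_of_zero_notMem ℂ
    rw [spectrum.map_polynomial_aeval_of_degree_pos _ _ (minpoly.degree_pos hint)]
    rintro ⟨k, hk, hk0⟩
    refine hL k ?_ (norm_of_mem_spectrum_shift k hk)
    rw [← hT]
    by_contra hns
    have hu : IsUnit (T - algebraMap ℂ _ k) := by
      have := (spectrum.notMem_iff.1 hns).neg
      simpa using this
    obtain ⟨r, hr⟩ := Polynomial.dvd_iff_isRoot.2 hk0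
    change p = _ at hr
    have hr0 : Polynomial.aeval T r = 0 := by
      have h6 : (T - algebraMap ℂ _ k) * Polynomial.aeval T r = 0 := by
        rw [← hp, hr]; simp
      exact (hu.mul_right_eq_zero).1 h6
    have hpne : p ≠ 0 := minpoly.ne_zero hint
    have hrne : r ≠ 0 := by rintro rfl; simp at hr; exact hpne hr
    have h7 : Polynomial.degree p ≤ Polynomial.degree r :=
      minpoly.degree_le_of_ne_zero ℂ T hrne hr0
    rw [hr, Polynomial.degree_mul, Polynomial.degree_X_sub_C,
      Polynomial.degree_eq_natDegree hrne] at h7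
    have h8 : 1 + r.natDegree ≤ r.natDegree := by exact_mod_cast h7
    omega
  rw [h3] at h5
  exact ((h1.sub_left h2).isUnit_mul_iff.1 h5).1

theorem orbit_zpow {X : Type*} [NormedAddCommGroup X] [NormedSpace ℂ X]
    (L : X ≃L[ℂ] X) (n : ℤ) (p : X) : (L ^ (n + 1)) p = L ((L ^ n) p) := by
  rw [add_comm, zpow_add, zpow_one]; rfl

theorem orbit_eq {X : Type*} [NormedAddCommGroup X] [NormedSpace ℂ X]
    (L : X ≃L[ℂ] X) (w : ℤ → X) (hw : ∀ n, w (n + 1) = L (w n)) (n : ℤ) :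
    (L ^ n) (w 0) = w n := by
  induction n using Int.induction_on with
  | zero => rfl
  | succ i ih => rw [orbit_zpow, ih, hw]
  | pred i ih =>
    apply L.injective
    rw [← orbit_zpow, ← hw, sub_add_cancel, ih]

theorem hyperbolic_expansive {X : Type*} [NormedAddCommGroup X] [NormedSpace ℂ X]
    [CompleteSpace X] [FiniteDimensional ℂ X] (L : X ≃L[ℂ] X) (hL : Hyperbolic L) :
    Expansive L := by
  obtain ⟨u, hu⟩ := isUnit_shift_sub L hL
  refine ⟨1, one_pos, fun x hx => ?_⟩
  let f : ℤ →ᵇ X := BoundedContinuousFunction.ofNormedAddCommGroup (fun n => (L ^ n) x)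
    continuous_of_discreteTopology 1 hx
  have hf : (u : (ℤ →ᵇ X) →L[ℂ] (ℤ →ᵇ X)) f = 0 := by
    rw [hu]
    ext n
    change (L ^ (n + 1)) x - L ((L ^ n) x) = 0
    rw [orbit_zpow, sub_self]
  have h0 : f = 0 := by
    have : ((u⁻¹ : _ˣ) * u : (ℤ →ᵇ X) →L[ℂ] (ℤ →ᵇ X)) f = 0 := by
      rw [mul_apply_eq_comp, hf, map_zero]
    simpa using this
  exact DFunLike.congr_fun h0 0

theorem hyperbolic_shadowing {X : Type*} [NormedAddCommGroup X] [NormedSpace ℂ X]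
    [CompleteSpace X] [FiniteDimensional ℂ X] (L : X ≃L[ℂ] X) (hL : Hyperbolic L) :
    ShadowingProperty L := by
  obtain ⟨u, hu⟩ := isUnit_shift_sub L hL
  intro ε hε
  set G : (ℤ →ᵇ X) →L[ℂ] (ℤ →ᵇ X) :=
    ((u⁻¹ : ((ℤ →ᵇ X) →L[ℂ] (ℤ →ᵇ X))ˣ) : (ℤ →ᵇ X) →L[ℂ] (ℤ →ᵇ X)) with hG
  have hpos : 0 < ‖G‖ + 1 := by positivity
  refine ⟨ε / (‖G‖ + 1), by positivity, fun x hx => ?_⟩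
  let y : ℤ →ᵇ X := BoundedContinuousFunction.ofNormedAddCommGroup
    (fun n => L (x n) - x (n + 1)) continuous_of_discreteTopology _ hx
  have hy : ‖y‖ ≤ ε / (‖G‖ + 1) := (BoundedContinuousFunction.norm_le (by positivity)).2 hx
  have hv : ∀ n, G y (n + 1) - L (G y n) = L (x n) - x (n + 1) := by
    have h1 : (u : (ℤ →ᵇ X) →L[ℂ] (ℤ →ᵇ X)) (G y) = y := by
      rw [← mul_apply_eq_comp, hG, Units.mul_inv]; rfl
    rw [hu] at h1
    intro n
    exact DFunLike.congr_fun h1 n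
  refine ⟨x 0 + G y 0, fun n => ?_⟩
  have := orbit_eq L (fun n => x n + G y n) (fun n => by
    have := hv n
    rw [sub_eq_sub_iff_add_eq_add] at this
    simp only [map_add]
    rw [← this]; abel) n
  rw [this, add_sub_cancel_left]
  calc ‖G y n‖ ≤ ‖G y‖ := (G y).norm_coe_le_norm n
    _ ≤ ‖G‖ * ‖y‖ := G.le_opNorm y
    _ ≤ (‖G‖ + 1) * (ε / (‖G‖ + 1)) := by gcongr; linarith
    _ = ε := by field_simp

theorem exists_eigen {X : Type*} [NormedAddCommGroup X] [NormedSpace ℂ X]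
    [FiniteDimensional ℂ X] (L : X →L[ℂ] X) (z : ℂ) (hz : z ∈ spectrum ℂ L) :
    (∃ v, v ≠ 0 ∧ L v = z • v) ∧ ∃ φ : X →L[ℂ] ℂ, φ ≠ 0 ∧ ∀ x, φ (L x) = z * φ x := by
  rw [spectrum.mem_iff] at hz
  set T : X →ₗ[ℂ] X := ((algebraMap ℂ (X →L[ℂ] X) z - L : X →L[ℂ] X) : X →ₗ[ℂ] X) with hT
  have hTa : ∀ x, T x = z • x - L x := fun x => by simp [hT, Algebra.algebraMap_eq_smul_one]
  have hinj : ¬ Function.Injective T := by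
    intro hi
    apply hz
    let e := (LinearEquiv.ofInjectiveEndo T hi).toContinuousLinearEquiv
    have he : (e : X →L[ℂ] X) = algebraMap ℂ (X →L[ℂ] X) z - L := by ext x; rfl
    rw [← he]
    exact ⟨⟨e, e.symm, by ext x; simp, by ext x; simp⟩, rfl⟩
  constructor
  · rw [← LinearMap.ker_eq_bot, Submodule.eq_bot_iff] at hinj
    push Not at hinj
    obtain ⟨v, hv, hv0⟩ := hinj
    rw [LinearMap.mem_ker, hTa, sub_eq_zero] at hv
    exact ⟨v, hv0, hv.symm⟩
  · have hlt : LinearMap.range T < ⊤ := by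
      rw [lt_top_iff_ne_top]
      intro h
      exact hinj (LinearMap.injective_iff_surjective.2 (LinearMap.range_eq_top.1 h))
    obtain ⟨f, hf, hle⟩ := Submodule.exists_le_ker_of_lt_top _ hlt
    refine ⟨LinearMap.toContinuousLinearMap f, by simpa using hf, fun x => ?_⟩
    have h1 : f (T x) = 0 := hle ⟨x, rfl⟩
    rw [hTa, map_sub, map_smul, sub_eq_zero, smul_eq_mul] at h1
    exact h1.symm

theorem expansive_hyperbolic {X : Type*} [NormedAddCommGroup X] [NormedSpace ℂ X]
    [CompleteSpace X] [FiniteDimensional ℂ X] (L : X ≃L[ℂ] X) (hL : Expansive L) :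
    Hyperbolic L := by
  intro z hz hz1
  obtain ⟨⟨v, hv0, hv⟩, -⟩ := exists_eigen _ z hz
  have hv' : L v = z • v := hv
  have hzne : z ≠ 0 := by rintro rfl; simp at hz1
  obtain ⟨ε, hε, h⟩ := hL
  have hvn : 0 < ‖v‖ := norm_pos_iff.2 hv0
  have := h (((ε / ‖v‖ : ℝ) : ℂ) • v) (fun n => by
    have h1 := orbit_eq L (fun n => z ^ n • v) (fun n => by
      simp only [map_smul, hv', smul_smul, zpow_add_one₀ hzne]) n
    simp only [zpow_zero, one_smul] at h1
    rw [map_smul, h1, norm_smul, norm_smul, norm_zpow, hz1, one_zpow, one_mul,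
      Complex.norm_real, Real.norm_of_nonneg (by positivity)]
    exact (div_mul_cancel₀ _ hvn.ne').le)
  rw [smul_eq_zero] at this
  rcases this with h1 | h1
  · have : ε / ‖v‖ = 0 := by exact_mod_cast h1
    have : 0 < ε / ‖v‖ := by positivity
    linarith
  · exact hv0 h1

theorem shadowing_hyperbolic {X : Type*} [NormedAddCommGroup X] [NormedSpace ℂ X]
    [CompleteSpace X] [FiniteDimensional ℂ X] (L : X ≃L[ℂ] X) (hL : ShadowingProperty L) :
    Hyperbolic L := by
  intro z hz hz1
  obtain ⟨-, φ, hφ0, hφ⟩ := exists_eigen _ z hz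
  have hφ' : ∀ x, φ (L x) = z * φ x := hφ
  have hzne : z ≠ 0 := by rintro rfl; simp at hz1
  obtain ⟨v, hv⟩ : ∃ v, φ v ≠ 0 := by
    by_contra! h
    exact hφ0 (by ext x; simpa using h x)
  have hv0 : v ≠ 0 := by rintro rfl; simp at hv
  have hvn : 0 < ‖v‖ := norm_pos_iff.2 hv0
  obtain ⟨δ, hδ, h⟩ := hL 1 one_pos
  set c : ℝ := δ / ‖v‖ with hc
  have hcpos : 0 < c := by positivity
  let u : ℕ → X := fun k => Nat.rec 0 (fun k w => L w + ((c : ℂ) * z ^ (k + 1)) • v) k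
  have hu : ∀ k, u (k + 1) = L (u k) + ((c : ℂ) * z ^ (k + 1)) • v := fun k => rfl
  have hu0 : u 0 = 0 := rfl
  obtain ⟨p, hp⟩ := h (fun n => u n.toNat) (fun n => by
    rcases lt_or_ge n 0 with hn | hn
    · have h1 : n.toNat = 0 := by omega
      have h2 : (n + 1).toNat = 0 := by omega
      simp [h1, h2, hu0, hδ.le]
    · have h2 : (n + 1).toNat = n.toNat + 1 := by omega
      simp only [h2, hu, sub_add_cancel_left]
      rw [norm_neg, norm_smul, norm_mul, norm_pow, hz1, one_pow, mul_one, Complex.norm_real,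
        Real.norm_of_nonneg hcpos.le]
      exact (div_mul_cancel₀ _ hvn.ne').le)
  have hφu : ∀ k : ℕ, φ (u k) = z ^ k * (k * (c * φ v)) := by
    intro k
    induction k with
    | zero => simp [hu0]
    | succ k ih =>
      rw [hu, map_add, hφ', ih, map_smul, smul_eq_mul]; push_cast; ring
  have hφp : ∀ k : ℕ, φ ((L ^ (k : ℤ)) p) = z ^ k * φ p := by
    intro k
    induction k with
    | zero => simp; rfl
    | succ k ih =>
      push_cast
      rw [orbit_zpow, hφ', ih]; ring
  have hbound : ∀ k : ℕ, (k : ℝ) * (c * ‖φ v‖) ≤ ‖φ‖ + ‖φ p‖ := by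
    intro k
    have h1 := hp k
    simp only [Int.toNat_natCast] at h1
    have h2 : ‖φ ((L ^ (k : ℤ)) p - u k)‖ ≤ ‖φ‖ * 1 :=
      (φ.le_opNorm _).trans (by gcongr)
    rw [map_sub, hφp, hφu, ← mul_sub, norm_mul, norm_pow, hz1, one_pow, one_mul] at h2
    have h3 : ‖(k : ℂ) * (c * φ v)‖ = k * (c * ‖φ v‖) := by
      rw [norm_mul, norm_mul, Complex.norm_real, Real.norm_of_nonneg hcpos.le, Complex.norm_natCast]
    have h4 := norm_sub_norm_le ((k : ℂ) * (c * φ v)) (φ p)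
    rw [norm_sub_rev] at h4
    linarith
  have hpos : 0 < c * ‖φ v‖ := mul_pos hcpos (norm_pos_iff.2 hv)
  obtain ⟨k, hk⟩ := exists_nat_gt ((‖φ‖ + ‖φ p‖) / (c * ‖φ v‖))
  rw [div_lt_iff₀ hpos] at hk
  linarith [hbound k]

/-- In finite dimension, hyperbolicity, expansivity and shadowing are
equivalent. -/
theorem finiteDimensional_hyperbolic_expansive_shadowing
    [FiniteDimensional ℂ X] (L : X ≃L[ℂ] X) :
    (Hyperbolic L ↔ Expansive L) ∧ (Expansive L ↔ ShadowingProperty L) := by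
  exact ⟨⟨hyperbolic_expansive L, expansive_hyperbolic L⟩,
    ⟨fun h => hyperbolic_shadowing L (expansive_hyperbolic L h),
      fun h => hyperbolic_expansive L (shadowing_hyperbolic L h)⟩⟩
end
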